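/- In the credit-inheritance semantics, save preserves erasure and potential up to its cost: if Γ : save m a ⇓ᶜᴵ_m Δ : v, then ⌊Γ⌋ᶜᴵ = ⌊Δ⌋ᶜᴵ, ⌊Γ⌋ᶜᴵ : save m a ⇓ᴿ_0 ⌊Δ⌋ᶜᴵ : a, and Φᶜᴵ(Δ) − Φᶜᴵ(Γ) ≤ m. -/

import Mathlib

/-! ## Syntax of the fine-grain call-by-value lambda calculus with thunks -/

mutual
inductive Val : Type where
  | var : String → Val
  | ptr : Nat → Val
  | unit : Val
  | inl : Val → Val
  | inr : Val → Val
  | pair : Val → Val → Val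
  | lam : String → Expr → Val

inductive HeapVal : Type where
  | fold : Val → HeapVal
  | memo : Val → HeapVal
  | lazy : String → Val → HeapVal

inductive Expr : Type where
  | ret : Val → Expr
  | alloc : HeapVal → Expr
  | letE : String → Expr → Expr → Expr
  | caseE : Val → String → Expr → String → Expr → Expr
  | splitE : Val → String → String → Expr → Expr
  | app : Val → Val → Expr
  | unfoldE : Val → Expr
  | call : String → Val → Expr
  | force : Val → Expr
  | save : Nat → Val → Expr
  | spend : Nat → Val → Expr → Expr
  | pass : Val → Expr
end

/-! ## Capture-avoiding substitution (values substituted are closed) -/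

mutual
def substV (v : Val) (x : String) : Val → Val
  | .var y => if y = x then v else .var y
  | .ptr a => .ptr a
  | .unit => .unit
  | .inl w => .inl (substV v x w)
  | .inr w => .inr (substV v x w)
  | .pair w₁ w₂ => .pair (substV v x w₁) (substV v x w₂)
  | .lam y e => if y = x then .lam y e else .lam y (substE v x e)

def substH (v : Val) (x : String) : HeapVal → HeapVal
  | .fold w => .fold (substV v x w)
  | .memo w => .memo (substV v x w)
  | .lazy F w => .lazy F (substV v x w)

def substE (v : Val) (x : String) : Expr → Expr
  | .ret w => .ret (substV v x w)
  | .alloc hv => .alloc (substH v x hv)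
  | .letE y e₁ e₂ => .letE y (substE v x e₁) (if y = x then e₂ else substE v x e₂)
  | .caseE w y₁ e₁ y₂ e₂ =>
      .caseE (substV v x w) y₁ (if y₁ = x then e₁ else substE v x e₁)
        y₂ (if y₂ = x then e₂ else substE v x e₂)
  | .splitE w y₁ y₂ e =>
      .splitE (substV v x w) y₁ y₂ (if y₁ = x ∨ y₂ = x then e else substE v x e)
  | .app w₁ w₂ => .app (substV v x w₁) (substV v x w₂)
  | .unfoldE w => .unfoldE (substV v x w)
  | .call F w => .call F (substV v x w)
  | .force w => .force (substV v x w)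
  | .save n w => .save n (substV v x w)
  | .spend n w e => .spend n (substV v x w) (substE v x e)
  | .pass w => .pass (substV v x w)
end

/-! ## Heaps: finite partial maps from pointers to (annotated) heap values -/

structure Heap (A : Type) : Type where
  look : Nat → Option A
  fin : {a : Nat | look a ≠ none}.Finite

namespace Heap

def empty {A : Type} : Heap A := ⟨fun _ => none, by simp⟩

def upd {A : Type} (Γ : Heap A) (a : Nat) (v : A) : Heap A :=
  ⟨fun b => if b = a then some v else Γ.look b, by
    apply Set.Finite.subset (Γ.fin.insert a)
    intro b hb
    simp only [Set.mem_setOf_eq] at hb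
    by_cases h : b = a
    · simp [h]
    · simp only [h, if_false] at hb
      exact Set.mem_insert_iff.mpr (Or.inr hb)⟩

def erase {A : Type} (Γ : Heap A) (a : Nat) : Heap A :=
  ⟨fun b => if b = a then none else Γ.look b, by
    apply Set.Finite.subset Γ.fin
    intro b hb
    simp only [Set.mem_setOf_eq] at hb ⊢
    by_cases h : b = a
    · simp [h] at hb
    · simpa [h] using hb⟩

def eraseSet {A : Type} (Γ : Heap A) (D : Finset Nat) : Heap A :=
  ⟨fun b => if b ∈ D then none else Γ.look b, by
    apply Set.Finite.subset Γ.fin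
    intro b hb
    simp only [Set.mem_setOf_eq] at hb ⊢
    by_cases h : b ∈ D
    · simp [h] at hb
    · simpa [h] using hb⟩

def map {A B : Type} (Γ : Heap A) (f : A → B) : Heap B :=
  ⟨fun b => (Γ.look b).map f, by
    apply Set.Finite.subset Γ.fin
    intro b hb
    simp only [Set.mem_setOf_eq] at hb ⊢
    intro h
    rw [h] at hb
    simp at hb⟩

noncomputable def dom {A : Type} (Γ : Heap A) : Finset Nat := Γ.fin.toFinset

/-- Sum a numeric annotation over all cells of the heap. -/
noncomputable def total {A : Type} (Γ : Heap A) (f : A → ℕ) : ℕ :=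
  ∑ a ∈ Γ.dom, (Γ.look a).elim 0 f

end Heap

/-! ## The real cost semantics ⇓ᴿ -/

/-- Environment of top-level (possibly recursive) function definitions. -/
abbrev FEnv := String → Option (String × Expr)

abbrev RHeap := Heap HeapVal

/-- Big-step real semantics `Γ : e ⇓ᴿ_k Δ : v`.  Lambda applications and
function calls cost one step; `save`, `spend` and `pass` are no-ops. -/
inductive RBig (𝓕 : FEnv) : RHeap → Expr → Nat → RHeap → Val → Prop where
  | ret : ∀ Γ v, RBig 𝓕 Γ (.ret v) 0 Γ v
  | alloc : ∀ Γ a hv, Γ.look a = none →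
      RBig 𝓕 Γ (.alloc hv) 0 (Γ.upd a hv) (.ptr a)
  | letE : ∀ Γ Δ Θ x e₁ e₂ k l v w,
      RBig 𝓕 Γ e₁ k Δ v → RBig 𝓕 Δ (substE v x e₂) l Θ w →
      RBig 𝓕 Γ (.letE x e₁ e₂) (k + l) Θ w
  | caseL : ∀ Γ Δ v x₁ e₁ x₂ e₂ k w,
      RBig 𝓕 Γ (substE v x₁ e₁) k Δ w →
      RBig 𝓕 Γ (.caseE (.inl v) x₁ e₁ x₂ e₂) k Δ w
  | caseR : ∀ Γ Δ v x₁ e₁ x₂ e₂ k w,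
      RBig 𝓕 Γ (substE v x₂ e₂) k Δ w →
      RBig 𝓕 Γ (.caseE (.inr v) x₁ e₁ x₂ e₂) k Δ w
  | splitE : ∀ Γ Δ v₁ v₂ x y e k w,
      RBig 𝓕 Γ (substE v₂ y (substE v₁ x e)) k Δ w →
      RBig 𝓕 Γ (.splitE (.pair v₁ v₂) x y e) k Δ w
  | app : ∀ Γ Δ x e v k w,
      RBig 𝓕 Γ (substE v x e) k Δ w →
      RBig 𝓕 Γ (.app (.lam x e) v) (k + 1) Δ w
  | unfoldE : ∀ Γ a v, Γ.look a = some (.fold v) →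
      RBig 𝓕 Γ (.unfoldE (.ptr a)) 0 Γ v
  | call : ∀ Γ Δ F x e v k w, 𝓕 F = some (x, e) →
      RBig 𝓕 Γ (substE v x e) k Δ w →
      RBig 𝓕 Γ (.call F v) (k + 1) Δ w
  | force : ∀ Γ Δ a F v k w, Γ.look a = some (.lazy F v) →
      RBig 𝓕 (Γ.erase a) (.call F v) k Δ w →
      RBig 𝓕 Γ (.force (.ptr a)) k (Δ.upd a (.memo w)) w
  | recall : ∀ Γ a v, Γ.look a = some (.memo v) →
      RBig 𝓕 Γ (.force (.ptr a)) 0 Γ v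
  | save : ∀ Γ m v, RBig 𝓕 Γ (.save m v) 0 Γ v
  | spend : ∀ Γ Δ m v e k w, RBig 𝓕 Γ e k Δ w →
      RBig 𝓕 Γ (.spend m v e) k Δ w
  | pass : ∀ Γ v, RBig 𝓕 Γ (.pass v) 0 Γ v

/-! ## Credit inheritance ⇓ᶜᴵ : memoised thunks carry an optional heir -/

/-- Heap values of the credit-inheritance model: credits on lazy thunks,
an (optional) heir pointer on memoised thunks. -/
inductive CIHV : Type where
  | fold : Val → CIHV
  | memo : Option ℕ → Val → CIHV
  | lazy : ℕ → String → Val → CIHV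

abbrev CIHeap := Heap CIHV

/-- Allocation in the credit-inheritance model. -/
def toCIHV : HeapVal → CIHV
  | .fold v => .fold v
  | .memo v => .memo none v
  | .lazy F v => .lazy 0 F v

/-- An heir set of at most one pointer, represented as an `Option`. -/
abbrev Heir := Option ℕ

/-- Union of two heir sets (used in the let rule). -/
def heirUnion (H₁ H₂ : Heir) : Heir := H₁.elim H₂ some

/-- The side condition `|h₁ ∪ h₂| ≤ 1` of the let rule. -/
def heirCompat (H₁ H₂ : Heir) : Prop := H₁ = none ∨ H₂ = none ∨ H₁ = H₂

/-- Big-step credit-inheritance semantics `Γ : e ⇓^H_k Δ : v`, where `H` is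
the heir set (of at most one pointer) chosen by the computation. -/
inductive CIBig (𝓕 : FEnv) : CIHeap → Expr → Heir → Nat → CIHeap → Val → Prop where
  | ret : ∀ Γ v, CIBig 𝓕 Γ (.ret v) none 0 Γ v
  | alloc : ∀ Γ a hv, Γ.look a = none →
      CIBig 𝓕 Γ (.alloc hv) none 0 (Γ.upd a (toCIHV hv)) (.ptr a)
  | letE : ∀ Γ Δ Θ x e₁ e₂ H₁ H₂ k l v w,
      CIBig 𝓕 Γ e₁ H₁ k Δ v → CIBig 𝓕 Δ (substE v x e₂) H₂ l Θ w →
      heirCompat H₁ H₂ →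
      CIBig 𝓕 Γ (.letE x e₁ e₂) (heirUnion H₁ H₂) (k + l) Θ w
  | caseL : ∀ Γ Δ v x₁ e₁ x₂ e₂ H k w,
      CIBig 𝓕 Γ (substE v x₁ e₁) H k Δ w →
      CIBig 𝓕 Γ (.caseE (.inl v) x₁ e₁ x₂ e₂) H k Δ w
  | caseR : ∀ Γ Δ v x₁ e₁ x₂ e₂ H k w,
      CIBig 𝓕 Γ (substE v x₂ e₂) H k Δ w →
      CIBig 𝓕 Γ (.caseE (.inr v) x₁ e₁ x₂ e₂) H k Δ w
  | splitE : ∀ Γ Δ v₁ v₂ x y e H k w,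
      CIBig 𝓕 Γ (substE v₂ y (substE v₁ x e)) H k Δ w →
      CIBig 𝓕 Γ (.splitE (.pair v₁ v₂) x y e) H k Δ w
  | app : ∀ Γ Δ x e v H k w,
      CIBig 𝓕 Γ (substE v x e) H k Δ w →
      CIBig 𝓕 Γ (.app (.lam x e) v) H (k + 1) Δ w
  | unfoldE : ∀ Γ a v, Γ.look a = some (.fold v) →
      CIBig 𝓕 Γ (.unfoldE (.ptr a)) none 0 Γ v
  | call : ∀ Γ Δ F x e v H k w, 𝓕 F = some (x, e) →
      CIBig 𝓕 Γ (substE v x e) H k Δ w →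
      CIBig 𝓕 Γ (.call F v) H (k + 1) Δ w
  | save : ∀ Γ a n F v m, Γ.look a = some (.lazy n F v) →
      CIBig 𝓕 Γ (.save m (.ptr a)) none m (Γ.upd a (.lazy (n + m) F v)) (.ptr a)
  | waste : ∀ Γ a v m, Γ.look a = some (.memo none v) →
      CIBig 𝓕 Γ (.save m (.ptr a)) none m Γ (.ptr a)
  | inherit : ∀ Γ Δ a h w m v, Γ.look a = some (.memo (some h) w) →
      CIBig 𝓕 Γ (.save m (.ptr h)) none m Δ v →
      CIBig 𝓕 Γ (.save m (.ptr a)) none m Δ (.ptr a)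
  | pass : ∀ Γ Δ h m v,
      CIBig 𝓕 Γ (.save m (.ptr h)) none m Δ v →
      CIBig 𝓕 Γ (.pass (.ptr h)) (some h) m Δ v
  | force : ∀ Γ Δ a n F v H k w, Γ.look a = some (.lazy n F v) →
      CIBig 𝓕 (Γ.erase a) (.call F v) H k Δ w → k = n →
      CIBig 𝓕 Γ (.force (.ptr a)) none 0 (Δ.upd a (.memo H w)) w
  | recall : ∀ Γ a H v, Γ.look a = some (.memo H v) →
      CIBig 𝓕 Γ (.force (.ptr a)) none 0 Γ v

/-- The potential Φᶜᴵ: the total number of credits on lazy thunks. -/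
noncomputable def ΦCI (Γ : CIHeap) : ℕ :=
  Γ.total (fun hv => match hv with | .lazy n _ _ => n | _ => 0)

/-- The erasure ⌊·⌋ᶜᴵ: drop credit and heir annotations. -/
def stripCI (Γ : CIHeap) : RHeap :=
  Γ.map (fun hv => match hv with
    | .fold v => .fold v
    | .memo _ v => .memo v
    | .lazy _ F v => .lazy F v)

theorem stripCI_upd_lazy (Γ : CIHeap) (a n n' : ℕ) (F : String) (v : Val)
    (h : Γ.look a = some (.lazy n F v)) :
    stripCI Γ = stripCI (Γ.upd a (.lazy n' F v)) := by
  unfold stripCI Heap.map Heap.upd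
  congr 1
  funext b
  by_cases hb : b = a
  · subst hb
    simp [h]
  · simp [hb]

theorem ΦCI_upd_lazy (Γ : CIHeap) (a n m : ℕ) (F : String) (v : Val)
    (h : Γ.look a = some (.lazy n F v)) :
    ΦCI (Γ.upd a (.lazy (n + m) F v)) = ΦCI Γ + m := by
  have hdom : (Γ.upd a (.lazy (n + m) F v)).dom = Γ.dom := by
    ext b
    by_cases hb : b = a
    · subst hb
      simp [Heap.dom, Heap.upd, h]
    · simp [Heap.dom, Heap.upd, hb]
  have ha : a ∈ Γ.dom := by simp [Heap.dom, h]
  unfold ΦCI Heap.total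
  rw [hdom, ← Finset.add_sum_erase _ _ ha, ← Finset.add_sum_erase Γ.dom _ ha]
  have hrest : ∀ b ∈ Γ.dom.erase a,
      (Γ.upd a (.lazy (n + m) F v)).look b = Γ.look b := by
    intro b hb
    simp [Heap.upd, Finset.ne_of_mem_erase hb]
  rw [Finset.sum_congr rfl (fun b hb => by rw [hrest b hb])]
  simp only [Heap.upd, h, if_true, Option.elim]
  omega

theorem save_sound_aux (𝓕 : FEnv) {Γ Δ : CIHeap} {e : Expr} {H : Heir} {k : ℕ} {v : Val}
    (h : CIBig 𝓕 Γ e H k Δ v) :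
    ∀ m a, e = .save m (.ptr a) → stripCI Γ = stripCI Δ ∧ ΦCI Δ ≤ ΦCI Γ + m := by
  induction h with
  | save Γ b n F v m' hl =>
    intro m a he
    cases he
    exact ⟨stripCI_upd_lazy _ _ _ _ _ _ hl, (ΦCI_upd_lazy _ _ _ _ _ _ hl).le⟩
  | waste Γ b v m' hl =>
    intro m a he
    exact ⟨rfl, Nat.le_add_right _ _⟩
  | inherit Γ Δ b h w m' v hl hs ih =>
    intro m a he
    cases he
    exact ih _ _ rfl
  | _ =>
    intro m a he
    cases he

/-- **Saving is sound in the credit-inheritance semantics** (Lemma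
`credit-inheritance-save-sound`): if `Γ : save m a ⇓ᶜᴵ_m Δ : v`, then
`⌊Γ⌋ᶜᴵ = ⌊Δ⌋ᶜᴵ`, `⌊Γ⌋ᶜᴵ : save m a ⇓ᴿ_0 ⌊Δ⌋ᶜᴵ : a`, and
`Φᶜᴵ(Δ) − Φᶜᴵ(Γ) ≤ m`. -/
theorem credit_inheritance_save_sound (𝓕 : FEnv) (Γ Δ : CIHeap)
    (m : ℕ) (a : ℕ) (v : Val)
    (h : CIBig 𝓕 Γ (.save m (.ptr a)) none m Δ v) :
    stripCI Γ = stripCI Δ ∧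
    RBig 𝓕 (stripCI Γ) (.save m (.ptr a)) 0 (stripCI Δ) (.ptr a) ∧
    (ΦCI Δ : ℤ) - (ΦCI Γ : ℤ) ≤ (m : ℤ) := by
  obtain ⟨h₁, h₂⟩ := save_sound_aux 𝓕 h m a rfl
  refine ⟨h₁, ?_, by omega⟩
  rw [h₁]
  exact RBig.save _ _ _
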